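/- Let α : [0,∞) → [0,∞) be nonincreasing, let n ≥ 1 be an integer and T > 0. For s = (s₁, …, s_{2n+2}) ∈ [0,T]^{2n+2}, let s_{(1)} ≤ s_{(2)} ≤ ⋯ ≤ s_{(2n+2)} denote the nondecreasing rearrangement of the coordinates of s, and set σ(s) := max( s_{(2n+2)} − s_{(2n+1)}, max_{1 ≤ ℓ ≤ n} ( s_{(2ℓ+1)} − s_{(2ℓ)} ) ). Then there is a constant c_n depending only on n (and not on α, T) such that ∫_{[0,T]^{2n+2}} α(σ(s)) ds ≤ c_n T^{n+1} ∫₀^∞ u^n α(u) du. -/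

import Mathlib

/-!
The integral is bounded by comparing distribution functions. By the layer cake formula applied on
both sides, it is enough to show, for each level `y`, that
`|{s ∈ [0,T]^{2n+2} : α(σ(s)) > y}| ≤ c T^{n+1} ν{α > y}`, where `ν` is the measure `uⁿ du` on
`[0, ∞)` (`volume_superlevel_le`). As `α` is nonincreasing, `{u ≥ 0 : α(u) > y}` is an initial
segment of `[0, ∞)`; if `t` is the supremum of its part inside `[0, T]`, its `ν`-measure is at least
`t^{n+1}/(n+1)`, whereas `α(σ(s)) > y` forces `σ(s) ≤ t` because `0 ≤ σ(s) ≤ T`.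

What remains is the volume bound `|{σ ≤ t}| ≤ (2n+2)! T^{n+1} t^{n+1}` (`volume_sigmaGap_le`).
After sorting the coordinates, which accounts for the factor `(2n+2)!`, the `n+1` gaps entering `σ`
have pairwise distinct upper endpoints. Replacing each of these upper coordinates by the
corresponding gap is a triangular linear map of determinant one (`gapMap`). It sends the sorted
points with `σ ≤ t` into a box with `n+1` sides of length `t` and `n+1` sides of length `T`.
-/

open MeasureTheory ENNReal

/-- The maximal gap `σ(s)` of a point `s ∈ ℝ^{2n+2}`: with
`s₍₁₎ ≤ ⋯ ≤ s₍₂ₙ₊₂₎` the nondecreasing rearrangement of the coordinates of `s`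
(1-based indexing), this is
`max( s₍₂ₙ₊₂₎ − s₍₂ₙ₊₁₎ , max_{1 ≤ ℓ ≤ n} ( s₍₂ℓ₊₁₎ − s₍₂ℓ₎ ) )`. -/
noncomputable def sigmaGap (n : ℕ) (s : Fin (2 * n + 2) → ℝ) : ℝ :=
  -- `s' j` is the `(j+1)`-th smallest coordinate of `s` (0-based indexing),
  -- so that the 1-based `s₍ⱼ₎` is `s' (j - 1)`.
  let s' : ℕ → ℝ := fun j => if h : j < 2 * n + 2 then s (Tuple.sort s ⟨j, h⟩) else 0
  Finset.fold max (s' (2 * n + 1) - s' (2 * n))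
    (fun ℓ => s' (2 * ℓ) - s' (2 * ℓ - 1)) (Finset.Icc 1 n)

/-- For `j < 2n + 2`, `IsGap n j` says that `j` (0-based) is the position of the upper endpoint of one of the `n + 1`
gaps in `sigmaGap n`: these positions are `2, 4, …, 2n` and `2n + 1`. The lower endpoint of the gap
then sits at position `j - 1`. -/
def IsGap (n j : ℕ) : Prop := (j ≠ 0 ∧ Even j) ∨ j = 2 * n + 1

instance (n : ℕ) : DecidablePred (IsGap n) := fun j => by unfold IsGap; infer_instance

/-- The linear map replacing the coordinate at each gap position `j` by the gap `x j - x (j - 1)`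
and keeping the other coordinates. At `j = 0`, which is not a gap position, the truncated index
`j - 1 = 0` is never used. -/
noncomputable def gapMap (n : ℕ) : (Fin (2 * n + 2) → ℝ) →ₗ[ℝ] (Fin (2 * n + 2) → ℝ) where
  toFun x j := x j - if IsGap n j then x ⟨j - 1, by omega⟩ else 0
  map_add' x y := by
    ext j
    simp only [Pi.add_apply]
    split_ifs <;> ring
  map_smul' a x := by
    ext j
    simp only [Pi.smul_apply, smul_eq_mul, RingHom.id_apply]
    split_ifs <;> ring

/-- The matrix of `gapMap` is lower triangular with ones on the diagonal. -/
lemma det_gapMap (n : ℕ) : LinearMap.det (gapMap n) = 1 := by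
  rw [← LinearMap.det_toMatrix', Matrix.det_of_isLowerTriangular]
  · refine Finset.prod_eq_one fun i _ => ?_
    rw [LinearMap.toMatrix'_apply]
    simp only [gapMap, LinearMap.coe_mk, AddHom.coe_mk, Pi.single_apply, if_true]
    have : IsGap n i → ¬ (⟨i - 1, by omega⟩ : Fin (2 * n + 2)) = i := by
      intro h h'
      rw [Fin.ext_iff] at h'
      simp only [IsGap] at h
      simp only at h'
      omega
    split_ifs with h1 h2
    · exact absurd h2 (this h1)
    · simp
    · simp
  · intro i j hij
    have hij' : i < j := hij
    rw [LinearMap.toMatrix'_apply]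
    simp only [gapMap, LinearMap.coe_mk, AddHom.coe_mk, Pi.single_apply]
    have h2 : ¬ (⟨i - 1, by omega⟩ : Fin (2 * n + 2)) = j := by
      rw [Fin.ext_iff]
      rw [Fin.lt_def] at hij'
      simp only
      omega
    simp [h2, hij'.ne]

/-- Exactly half of the `2n + 2` positions are gap positions. -/
lemma prod_gap (n : ℕ) (a b : ℝ≥0∞) :
    ∏ j : Fin (2 * n + 2), (if IsGap n j then a else b) = b ^ (n + 1) * a ^ (n + 1) := by
  rw [Fin.prod_univ_eq_prod_range (fun j => if IsGap n j then a else b) (2 * n + 2)]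
  -- Positions are taken two at a time; the last one, `2n + 1`, breaks the alternation and is
  -- therefore split off.
  have key : ∀ m ≤ n, ∏ j ∈ Finset.range (2 * m + 1), (if IsGap n j then a else b)
      = b ^ (m + 1) * a ^ m := by
    intro m
    induction m with
    | zero => intro _; simp [IsGap]
    | succ m ih =>
      intro hm
      have h1 : ¬ IsGap n (2 * m + 1) := by
        simp only [IsGap, not_or, not_and, Nat.not_even_iff_odd]
        exact ⟨fun _ => ⟨m, rfl⟩, by omega⟩
      have h2 : IsGap n (2 * m + 1 + 1) := Or.inl ⟨by omega, ⟨m + 1, by ring⟩⟩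
      rw [show 2 * (m + 1) + 1 = 2 * m + 1 + 1 + 1 by ring, Finset.prod_range_succ,
        Finset.prod_range_succ, ih (by omega), if_neg h1, if_pos h2]
      ring
  have h3 : IsGap n (2 * n + 1) := Or.inr rfl
  rw [Finset.prod_range_succ, key n le_rfl, if_pos h3]
  ring

/-- Each cell is the preimage of a box under two measure-preserving maps, a permutation of the
coordinates followed by `gapMap`. -/
lemma volume_gap_cell (n : ℕ) (t T : ℝ) (π : Equiv.Perm (Fin (2 * n + 2))) :
    volume {s : Fin (2 * n + 2) → ℝ |
      gapMap n (s ∘ π) ∈ Set.univ.pi fun j : Fin (2 * n + 2) =>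
        Set.Icc (0 : ℝ) (if IsGap n j then t else T)}
      = ENNReal.ofReal T ^ (n + 1) * ENNReal.ofReal t ^ (n + 1) := by
  set B : Set (Fin (2 * n + 2) → ℝ) := Set.univ.pi fun j : Fin (2 * n + 2) =>
        Set.Icc (0 : ℝ) (if IsGap n j then t else T) with hB
  have h1 : volume (gapMap n ⁻¹' B) = volume B := by
    rw [Measure.addHaar_preimage_linearMap _ (by rw [det_gapMap]; exact one_ne_zero), det_gapMap]
    simp
  have h2 : volume B = ENNReal.ofReal T ^ (n + 1) * ENNReal.ofReal t ^ (n + 1) := by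
    rw [hB, volume_pi_pi, ← prod_gap]
    refine Finset.prod_congr rfl fun j _ => ?_
    rw [Real.volume_Icc, sub_zero]
    split_ifs <;> rfl
  have hp := (volume_measurePreserving_piCongrLeft (fun _ : Fin (2 * n + 2) => ℝ) π).symm
  have h3 := hp.measure_preimage_equiv (gapMap n ⁻¹' B)
  rw [← h2, ← h1, ← h3]
  rfl

lemma sigmaGap_nonneg (n : ℕ) (s : Fin (2 * n + 2) → ℝ) : 0 ≤ sigmaGap n s := by
  refine (Finset.le_fold_max _).2 (Or.inl ?_)
  beta_reduce
  rw [dif_pos (by omega), dif_pos (by omega), sub_nonneg]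
  exact Tuple.monotone_sort s (by rw [Fin.le_def]; simp)

lemma sigmaGap_le (n : ℕ) (s : Fin (2 * n + 2) → ℝ) {T : ℝ}
    (hs : s ∈ Set.univ.pi fun _ : Fin (2 * n + 2) => Set.Icc (0 : ℝ) T) : sigmaGap n s ≤ T := by
  have hs' : ∀ i, 0 ≤ s i ∧ s i ≤ T := fun i => hs i trivial
  refine (Finset.fold_max_le _).2 ⟨?_, fun ℓ hℓ => ?_⟩
  · beta_reduce
    rw [dif_pos (by omega), dif_pos (by omega)]
    linarith [(hs' (Tuple.sort s ⟨2 * n + 1, by omega⟩)).2, (hs' (Tuple.sort s ⟨2 * n, by omega⟩)).1]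
  · rw [Finset.mem_Icc] at hℓ
    beta_reduce
    rw [dif_pos (by omega), dif_pos (by omega)]
    linarith [(hs' (Tuple.sort s ⟨2 * ℓ, by omega⟩)).2,
      (hs' (Tuple.sort s ⟨2 * ℓ - 1, by omega⟩)).1]

/-- Points of the cube with `σ ≤ t` lie in the cell indexed by their sorting permutation. -/
lemma sort_mem_cell (n : ℕ) (s : Fin (2 * n + 2) → ℝ) {t T : ℝ}
    (hs : s ∈ Set.univ.pi fun _ : Fin (2 * n + 2) => Set.Icc (0 : ℝ) T) (ht : sigmaGap n s ≤ t) :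
    gapMap n (s ∘ Tuple.sort s) ∈ Set.univ.pi fun j : Fin (2 * n + 2) =>
        Set.Icc (0 : ℝ) (if IsGap n j then t else T) := by
  obtain ⟨hlast, hmid⟩ := (Finset.fold_max_le _).1 ht
  intro j _
  simp only [gapMap, LinearMap.coe_mk, AddHom.coe_mk]
  by_cases hj : IsGap n j
  · rw [if_pos hj, if_pos hj]
    refine ⟨sub_nonneg.2 (Tuple.monotone_sort s (by rw [Fin.le_def]; simp)), ?_⟩
    obtain ⟨j, hjlt⟩ := j
    rcases hj with ⟨h0, ℓ, hℓ⟩ | h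
    · simp only at h0 hℓ
      have := hmid ℓ (Finset.mem_Icc.2 ⟨by omega, by omega⟩)
      beta_reduce at this
      rw [dif_pos (by omega), dif_pos (by omega)] at this
      obtain rfl : j = 2 * ℓ := by omega
      exact this
    · simp only at h
      subst h
      beta_reduce at hlast
      rw [dif_pos (by omega), dif_pos (by omega)] at hlast
      exact hlast
  · rw [if_neg hj, if_neg hj, sub_zero]
    exact hs _ trivial

/-- The sublevel set of `σ` is covered by `(2n+2)!` cells, one for each ordering of the
coordinates. -/
lemma volume_sigmaGap_le (n : ℕ) (t T : ℝ) :
    volume {s ∈ Set.univ.pi fun _ : Fin (2 * n + 2) => Set.Icc (0 : ℝ) T | sigmaGap n s ≤ t}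
      ≤ (2 * n + 2).factorial * (ENNReal.ofReal T ^ (n + 1) * ENNReal.ofReal t ^ (n + 1)) := by
  calc _ ≤ volume (⋃ π : Equiv.Perm (Fin (2 * n + 2)), {s : Fin (2 * n + 2) → ℝ |
      gapMap n (s ∘ π) ∈ Set.univ.pi fun j : Fin (2 * n + 2) =>
        Set.Icc (0 : ℝ) (if IsGap n j then t else T)}) :=
        measure_mono fun s hs => Set.mem_iUnion.2 ⟨Tuple.sort s, sort_mem_cell n s hs.1 hs.2⟩
    _ ≤ ∑ π : Equiv.Perm (Fin (2 * n + 2)), volume {s : Fin (2 * n + 2) → ℝ |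
      gapMap n (s ∘ π) ∈ Set.univ.pi fun j : Fin (2 * n + 2) =>
        Set.Icc (0 : ℝ) (if IsGap n j then t else T)} := measure_iUnion_fintype_le _ _
    _ = _ := by
      simp only [volume_gap_cell, Finset.sum_const, Finset.card_univ, Fintype.card_perm,
        Fintype.card_fin, nsmul_eq_mul]

lemma lintegral_pow_Ico (n : ℕ) {t : ℝ} (ht : 0 ≤ t) :
    ∫⁻ u in Set.Ico 0 t, ENNReal.ofReal (u ^ n) = ENNReal.ofReal (t ^ (n + 1) / (n + 1)) := by
  rw [Measure.restrict_congr_set Ico_ae_eq_Ioc, ← ofReal_integral_eq_lintegral_ofReal,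
    ← intervalIntegral.integral_of_le ht, integral_pow]
  · simp
  · exact (intervalIntegrable_iff_integrableOn_Ioc_of_le ht).1
      ((continuous_pow n).intervalIntegrable _ _)
  · filter_upwards [ae_restrict_mem measurableSet_Ioc] with u hu
    exact pow_nonneg hu.1.le n

/-- The measure `uⁿ du` on `[0, ∞)`. -/
noncomputable def powMeasure (n : ℕ) : Measure ℝ :=
  (volume.restrict (Set.Ici 0)).withDensity fun u => ENNReal.ofReal (u ^ n)

/-- The comparison of distribution functions that is integrated over `y` in the layer cake
formula. -/
lemma volume_superlevel_le (n : ℕ) (α : ℝ → ℝ) (hα : AntitoneOn α (Set.Ici 0)) {T : ℝ}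
    (hT : 0 < T) (y : ℝ) :
    volume {s ∈ Set.univ.pi fun _ : Fin (2 * n + 2) => Set.Icc (0 : ℝ) T | y < α (sigmaGap n s)}
      ≤ ENNReal.ofReal (((2 * n + 2).factorial * (n + 1)) * T ^ (n + 1)) *
        powMeasure n {u | y < α u} := by
  -- Intersecting with `[0, T]` keeps `S` bounded, so that `sSup S` is meaningful even when `α > y`
  -- everywhere. If `S` is empty, `t = 0` and both inclusions below have empty left-hand sides.
  set S : Set ℝ := {u | u ∈ Set.Icc 0 T ∧ y < α u} with hS
  set t := sSup S with ht
  have hbdd : BddAbove S := ⟨T, fun u hu => hu.1.2⟩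
  have ht0 : 0 ≤ t := Real.sSup_nonneg fun u hu => hu.1.1
  have h1 : {s ∈ Set.univ.pi fun _ : Fin (2 * n + 2) => Set.Icc (0 : ℝ) T |
      y < α (sigmaGap n s)} ⊆ {s ∈ Set.univ.pi fun _ : Fin (2 * n + 2) => Set.Icc (0 : ℝ) T |
        sigmaGap n s ≤ t} := fun s hs =>
    ⟨hs.1, le_csSup hbdd ⟨⟨sigmaGap_nonneg n s, sigmaGap_le n s hs.1⟩, hs.2⟩⟩
  have h2 : Set.Ico 0 t ⊆ {u | y < α u} := by
    rintro u ⟨hu0, hut⟩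
    have hne : S.Nonempty := by
      by_contra h
      rw [Set.not_nonempty_iff_eq_empty] at h
      rw [ht, h, Real.sSup_empty] at hut
      linarith
    obtain ⟨v, hv, huv⟩ := exists_lt_of_lt_csSup hne hut
    exact hv.2.trans_le (hα hu0 hv.1.1 huv.le)
  have h3 : ENNReal.ofReal (t ^ (n + 1) / (n + 1)) ≤ powMeasure n {u | y < α u} := by
    refine le_trans (le_of_eq ?_) (measure_mono h2)
    rw [powMeasure, withDensity_apply _ measurableSet_Ico,
      Measure.restrict_restrict measurableSet_Ico,
      Set.inter_eq_left.2 Set.Ico_subset_Ici_self, lintegral_pow_Ico n ht0]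
  calc _ ≤ _ := measure_mono h1
    _ ≤ _ := volume_sigmaGap_le n t T
    _ = ENNReal.ofReal (((2 * n + 2).factorial * (n + 1)) * T ^ (n + 1)) *
        ENNReal.ofReal (t ^ (n + 1) / (n + 1)) := by
      rw [← ENNReal.ofReal_mul (by positivity), ← ENNReal.ofReal_pow hT.le,
        ← ENNReal.ofReal_pow ht0, ← ENNReal.ofReal_natCast, ← ENNReal.ofReal_mul (by positivity),
        ← ENNReal.ofReal_mul (by positivity)]
      congr 1
      field_simp
    _ ≤ _ := by gcongr

/-- One direction of the layer cake formula, with no measurability assumption on `f`: the lower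
Lebesgue integral is attained by a measurable minorant. It makes measurability of `σ`
unnecessary. -/
lemma lintegral_ofReal_le_meas_lt {X : Type*} [MeasurableSpace X] (μ : Measure X) (f : X → ℝ)
    (hf : ∀ x, 0 ≤ f x) :
    ∫⁻ x, ENNReal.ofReal (f x) ∂μ ≤ ∫⁻ y in Set.Ioi (0 : ℝ), μ {x | y < f x} := by
  obtain ⟨g, hgm, hgf, hg⟩ := exists_measurable_le_lintegral_eq μ fun x => ENNReal.ofReal (f x)
  have hfin : ∀ x, g x ≠ ∞ := fun x => ((hgf x).trans_lt ENNReal.ofReal_lt_top).ne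
  have hle : ∀ x, (g x).toReal ≤ f x := fun x => ENNReal.toReal_le_of_le_ofReal (hf x) (hgf x)
  calc _ = ∫⁻ x, ENNReal.ofReal (g x).toReal ∂μ := by
        rw [hg]; exact lintegral_congr fun x => (ENNReal.ofReal_toReal (hfin x)).symm
    _ = ∫⁻ y in Set.Ioi (0 : ℝ), μ {x | y < (g x).toReal} :=
        lintegral_eq_lintegral_meas_lt μ (Filter.Eventually.of_forall fun _ => ENNReal.toReal_nonneg)
          hgm.ennreal_toReal.aemeasurable
    _ ≤ _ := lintegral_mono fun y => measure_mono fun x (hx : y < _) => hx.trans_le (hle x)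

/-- For a nonincreasing `α : [0,∞) → [0,∞)`, `n ≥ 1` and `T > 0`, the integral of
`α(σ(s))` over the cube `[0,T]^{2n+2}` is bounded by `cₙ T^{n+1} ∫₀^∞ uⁿ α(u) du`,
where `cₙ` depends only on `n` (and not on `α` or `T`). -/
theorem lintegral_alpha_sigmaGap_le (n : ℕ) (hn : 1 ≤ n) :
    ∃ c : ℝ, 0 < c ∧
      ∀ (α : ℝ → ℝ), (∀ x, 0 ≤ α x) → AntitoneOn α (Set.Ici 0) →
        ∀ T : ℝ, 0 < T →
          ∫⁻ s in Set.univ.pi (fun _ : Fin (2 * n + 2) => Set.Icc (0 : ℝ) T),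
              ENNReal.ofReal (α (sigmaGap n s))
            ≤ ENNReal.ofReal (c * T ^ (n + 1)) *
                ∫⁻ u in Set.Ici (0 : ℝ), ENNReal.ofReal (u ^ n * α u) := by
  refine ⟨(2 * n + 2).factorial * (n + 1), by positivity, fun α hα0 hα T hT => ?_⟩
  have hcube : MeasurableSet (Set.univ.pi fun _ : Fin (2 * n + 2) => Set.Icc (0 : ℝ) T) :=
    MeasurableSet.univ_pi fun _ => measurableSet_Icc
  have hdens : Measurable fun u : ℝ => ENNReal.ofReal (u ^ n) := by fun_prop
  have hαm : AEMeasurable α (volume.restrict (Set.Ici 0)) :=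
    aemeasurable_restrict_of_antitoneOn measurableSet_Ici hα
  have hαν : AEMeasurable α (powMeasure n) := hαm.mono_ac (withDensity_absolutelyContinuous _ _)
  have hint : ∫⁻ u, ENNReal.ofReal (α u) ∂(powMeasure n)
      = ∫⁻ u in Set.Ici (0 : ℝ), ENNReal.ofReal (u ^ n * α u) := by
    rw [powMeasure, lintegral_withDensity_eq_lintegral_mul₀ hdens.aemeasurable hαm.ennreal_ofReal]
    refine setLIntegral_congr_fun measurableSet_Ici fun u hu => ?_
    exact (ENNReal.ofReal_mul (pow_nonneg hu n)).symm
  calc _ ≤ _ := lintegral_ofReal_le_meas_lt _ _ fun s => hα0 _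
    _ ≤ ∫⁻ y in Set.Ioi (0 : ℝ), ENNReal.ofReal (((2 * n + 2).factorial * (n + 1)) * T ^ (n + 1)) *
        powMeasure n {u | y < α u} := lintegral_mono fun y => by
      rw [Measure.restrict_apply' hcube, Set.inter_comm]
      exact volume_superlevel_le n α hα hT y
    _ = _ := by
      rw [lintegral_const_mul' _ _ ENNReal.ofReal_ne_top, ← hint,
        lintegral_eq_lintegral_meas_lt _ (Filter.Eventually.of_forall hα0) hαν]
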